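/- arXiv:1703.02444 — 3 statements merged into one kernel-verified Lean document; each statement's English description precedes it below -/
import Mathlib

section
/- For every real x with |x| < pi/2, the series sum over m >= 0 of 2^m * vol(Q(P_m)) * x^(2m+1) converges to tan(x), where vol(Q(P_m)) is the (2m+1)-dimensional Lebesgue volume of Q(P_m). -/
open MeasureTheory Filter

noncomputable section

/-- The standard relaxation `Q(G)` of the boolean quadric polytope of a graph `G`:
the set of points of `[0,1]^(V + E)` satisfying, for each edge `(i,j)`,
`0 ≤ y_{ij}`, `y_{ij} ≤ x_i`, `y_{ij} ≤ x_j` and `x_i + x_j ≤ 1 + y_{ij}`. -/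
def QSet {V : Type*} (G : SimpleGraph V) : Set ((V → ℝ) × (↥G.edgeSet → ℝ)) :=
  {p | (∀ i, p.1 i ∈ Set.Icc (0 : ℝ) 1) ∧ (∀ e, p.2 e ∈ Set.Icc (0 : ℝ) 1) ∧
    ∀ (i j : V) (h : G.Adj i j),
      0 ≤ p.2 ⟨s(i, j), (SimpleGraph.mem_edgeSet _).mpr h⟩ ∧
      p.2 ⟨s(i, j), (SimpleGraph.mem_edgeSet _).mpr h⟩ ≤ p.1 i ∧
      p.2 ⟨s(i, j), (SimpleGraph.mem_edgeSet _).mpr h⟩ ≤ p.1 j ∧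
      p.1 i + p.1 j ≤ 1 + p.2 ⟨s(i, j), (SimpleGraph.mem_edgeSet _).mpr h⟩}

/-- The path `P_m` with `m + 1` vertices and `m` edges. -/
def pathG (m : ℕ) : SimpleGraph (Fin (m + 1)) :=
  SimpleGraph.fromRel (fun i j => (i : ℕ) + 1 = (j : ℕ))

instance (m : ℕ) : DecidableRel (pathG m).Adj := fun i j =>
  decidable_of_iff _ (SimpleGraph.fromRel_adj _ i j).symm

/-!
Over a point `x` of the unit cube, the fibre of `Q(G)` is a box with one side per edge, whose length
on an edge `ij` is `K(x_i, x_j) = min x_i x_j - max 0 (x_i + x_j - 1)`. Hence the volume of `Q(P_m)`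
is `∫ T^m 1`, where `T` is the integral operator on `[0,1]` with kernel `K`.

The kernel is piecewise affine, and two integrations by parts show that
`φ_x(a) = cos (x - 2xa) / cos x` solves `φ_x = 1 + 2x² T φ_x`. Iterating this resolvent equation
expands `∫ φ_x = tan x / x` as `∑ (2x²)^m ∫ T^m 1` up to the remainder `(2x²)^N ∫ T^N φ_x`.
For `|x| < y < π/2` the function `φ_y` dominates a multiple of `φ_x` and satisfies
`T φ_y ≤ φ_y / (2y²)`, so the remainder is `O((x/y)^(2N))`.
-/

section TransferOperator

open scoped ENNReal

variable {α : Type*} [MeasurableSpace α] {k : α → α → ℝ≥0∞} {μ : Measure α}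

/-- The integral operator with kernel `k`, acting on `[0, ∞]`-valued functions so that neither
integrability nor boundedness has to be assumed. -/
def lintegralOp (k : α → α → ℝ≥0∞) (μ : Measure α) (f : α → ℝ≥0∞) (b : α) : ℝ≥0∞ :=
  ∫⁻ a, k a b * f a ∂μ

lemma measurable_lintegralOp [SFinite μ] (hk : Measurable (Function.uncurry k))
    {f : α → ℝ≥0∞} (hf : Measurable f) : Measurable (lintegralOp k μ f) :=
  (hk.mul (hf.comp measurable_fst)).lintegral_prod_left'

lemma monotone_lintegralOp : Monotone (lintegralOp k μ) := fun _ _ hfg _ =>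
  lintegral_mono fun a => mul_le_mul_right (hfg a) _

lemma lintegralOp_const_smul {c : ℝ≥0∞} (hc : c ≠ ∞) (f : α → ℝ≥0∞) :
    lintegralOp k μ (c • f) = c • lintegralOp k μ f := by
  funext b
  simp only [lintegralOp, Pi.smul_apply, smul_eq_mul, mul_left_comm _ c,
    lintegral_const_mul' c _ hc]

lemma lintegralOp_add (hk : Measurable (Function.uncurry k)) {f : α → ℝ≥0∞} (hf : Measurable f)
    (g : α → ℝ≥0∞) : lintegralOp k μ (f + g) = lintegralOp k μ f + lintegralOp k μ g := by
  funext b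
  simp only [lintegralOp, Pi.add_apply, mul_add]
  exact lintegral_add_left (hk.of_uncurry_right.mul hf) _

lemma iterate_lintegralOp_le {q C : ℝ≥0∞} (hq : q ≠ ∞) (hC : C ≠ ∞) {f φ : α → ℝ≥0∞}
    (hφ : lintegralOp k μ φ ≤ q • φ) (hf : f ≤ C • φ) (n : ℕ) :
    (lintegralOp k μ)^[n] f ≤ (C * q ^ n) • φ := by
  induction n with
  | zero => simpa using hf
  | succ n ih =>
    rw [Function.iterate_succ_apply']
    calc lintegralOp k μ ((lintegralOp k μ)^[n] f)
        ≤ lintegralOp k μ ((C * q ^ n) • φ) := monotone_lintegralOp ih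
      _ = (C * q ^ n) • lintegralOp k μ φ :=
        lintegralOp_const_smul (ENNReal.mul_ne_top hC (ENNReal.pow_ne_top hq)) φ
      _ ≤ (C * q ^ n) • q • φ := fun a => mul_le_mul_right (hφ a) _
      _ = (C * q ^ (n + 1)) • φ := by rw [smul_smul, pow_succ, mul_assoc]

lemma measurable_iterate_lintegralOp [SFinite μ] (hk : Measurable (Function.uncurry k))
    {f : α → ℝ≥0∞} (hf : Measurable f) (n : ℕ) : Measurable ((lintegralOp k μ)^[n] f) :=
  Function.Iterate.rec Measurable hf (fun _ => measurable_lintegralOp hk) n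

lemma iterate_lintegralOp_resolvent [SFinite μ] (hk : Measurable (Function.uncurry k))
    {s : ℝ≥0∞} (hs : s ≠ ∞) {f g : α → ℝ≥0∞} (hg : Measurable g)
    (hfg : f = g + s • lintegralOp k μ f) (n : ℕ) :
    (lintegralOp k μ)^[n] f
      = (lintegralOp k μ)^[n] g + s • (lintegralOp k μ)^[n + 1] f := by
  induction n with
  | zero => exact hfg
  | succ n ih =>
    simp only [Function.iterate_succ_apply'] at ih ⊢
    nth_rw 1 [ih]
    rw [lintegralOp_add hk (measurable_iterate_lintegralOp hk hg n), lintegralOp_const_smul hs]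

lemma sum_lintegral_iterate_add_remainder [SFinite μ] (hk : Measurable (Function.uncurry k))
    {s : ℝ≥0∞} (hs : s ≠ ∞) {f g : α → ℝ≥0∞} (hg : Measurable g)
    (hfg : f = g + s • lintegralOp k μ f) (N : ℕ) :
    ∑ m ∈ Finset.range N, s ^ m * ∫⁻ a, (lintegralOp k μ)^[m] g a ∂μ
      + s ^ N * ∫⁻ a, (lintegralOp k μ)^[N] f a ∂μ = ∫⁻ a, f a ∂μ := by
  induction N with
  | zero => simp
  | succ N ih =>
    have split : ∫⁻ a, (lintegralOp k μ)^[N] f a ∂μ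
        = ∫⁻ a, (lintegralOp k μ)^[N] g a ∂μ
          + s * ∫⁻ a, (lintegralOp k μ)^[N + 1] f a ∂μ := by
      rw [← lintegral_const_mul' s _ hs,
        ← lintegral_add_left (measurable_iterate_lintegralOp hk hg N)]
      exact lintegral_congr (congrFun (iterate_lintegralOp_resolvent hk hs hg hfg N))
    rw [← ih, split, Finset.sum_range_succ]
    ring

/-- The supersolution `φ` keeps the spectral radius away from `1 / s`, which makes the remainder
of the Neumann series vanish in the limit. -/
theorem hasSum_lintegral_iterate_lintegralOp [SFinite μ] (hk : Measurable (Function.uncurry k))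
    {s q C : ℝ≥0∞} (hs : s ≠ ∞) (hq : q ≠ ∞) (hC : C ≠ ∞) (hsq : s * q < 1)
    {f g φ : α → ℝ≥0∞} (hg : Measurable g) (hfg : f = g + s • lintegralOp k μ f)
    (hφ : lintegralOp k μ φ ≤ q • φ) (hfφ : f ≤ C • φ) (hφ_int : ∫⁻ a, φ a ∂μ ≠ ∞) :
    HasSum (fun m => s ^ m * ∫⁻ a, (lintegralOp k μ)^[m] g a ∂μ) (∫⁻ a, f a ∂μ) := by
  have remainder_le (N : ℕ) : s ^ N * ∫⁻ a, (lintegralOp k μ)^[N] f a ∂μ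
      ≤ (s * q) ^ N * (C * ∫⁻ a, φ a ∂μ) :=
    calc s ^ N * ∫⁻ a, (lintegralOp k μ)^[N] f a ∂μ
        ≤ s ^ N * ∫⁻ a, C * q ^ N * φ a ∂μ := by
          gcongr with a
          exact iterate_lintegralOp_le hq hC hφ hfφ N a
      _ = (s * q) ^ N * (C * ∫⁻ a, φ a ∂μ) := by
          rw [lintegral_const_mul' _ _ (ENNReal.mul_ne_top hC (ENNReal.pow_ne_top hq))]
          ring
  have geometric : Tendsto (fun N => (s * q) ^ N * (C * ∫⁻ a, φ a ∂μ)) atTop (nhds 0) := by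
    simpa using ENNReal.Tendsto.mul_const (ENNReal.tendsto_pow_atTop_nhds_zero_of_lt_one hsq)
      (Or.inr (ENNReal.mul_ne_top hC hφ_int))
  have remainder : Tendsto (fun N => s ^ N * ∫⁻ a, (lintegralOp k μ)^[N] f a ∂μ) atTop (nhds 0) :=
    tendsto_of_tendsto_of_tendsto_of_le_of_le tendsto_const_nhds geometric
      (fun _ => zero_le) remainder_le
  have summable : Summable fun m => s ^ m * ∫⁻ a, (lintegralOp k μ)^[m] g a ∂μ :=
    ENNReal.summable
  have partialSums := summable.hasSum.tendsto_sum_nat.add remainder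
  simp only [sum_lintegral_iterate_add_remainder hk hs hg hfg, add_zero] at partialSums
  rw [tendsto_nhds_unique tendsto_const_nhds partialSums]
  exact summable.hasSum

theorem lintegral_mul_prod_succ_eq_lintegral_iterate [SigmaFinite μ]
    (hk : Measurable (Function.uncurry k)) (m : ℕ) {h : α → ℝ≥0∞} (hh : Measurable h) :
    ∫⁻ x : Fin (m + 1) → α, (∏ i : Fin m, k (x i.castSucc) (x i.succ)) * h (x 0)
        ∂Measure.pi (fun _ => μ)
      = ∫⁻ a, (lintegralOp k μ)^[m] h a ∂μ := by
  induction m generalizing h with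
  | zero =>
    simp only [Finset.univ_eq_empty, Finset.prod_empty, one_mul, Function.iterate_zero, id]
    exact (measurePreserving_funUnique μ (Fin 1)).lintegral_comp hh
  | succ m ih =>
    have cons := (measurePreserving_piFinSuccAbove (fun _ : Fin (m + 2) => μ) 0).symm
    have measurable_integrand : Measurable fun x : Fin (m + 2) → α =>
        (∏ i : Fin (m + 1), k (x i.castSucc) (x i.succ)) * h (x 0) := by
      have measurable_factor (i : Fin (m + 1)) :
          Measurable fun x : Fin (m + 2) → α => k (x i.castSucc) (x i.succ) :=
        hk.comp (f := fun x : Fin (m + 2) → α => (x i.castSucc, x i.succ)) (by fun_prop)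
      exact (Finset.measurable_fun_prod _ fun i _ => measurable_factor i).mul
        (hh.comp (measurable_pi_apply 0))
    rw [Function.iterate_succ_apply, ← ih (measurable_lintegralOp hk hh),
      ← cons.lintegral_comp measurable_integrand]
    refine (lintegral_prod_symm' _ (measurable_integrand.comp cons.measurable)).trans
      (lintegral_congr fun y => ?_)
    have measurable_kernel_mul : Measurable fun a => k a (y 0) * h a :=
      hk.of_uncurry_right.mul hh
    rw [lintegralOp, ← lintegral_const_mul _ measurable_kernel_mul]
    refine lintegral_congr fun a => ?_
    simp only [Function.comp_apply, MeasurableEquiv.piFinSuccAbove_symm_apply,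
      Fin.insertNthEquiv_apply, Fin.insertNth_zero', Fin.cons_zero, Fin.cons_succ,
      Fin.prod_univ_succ, Fin.castSucc_zero, ← Fin.succ_castSucc]
    ring

end TransferOperator

section Fibre

/-- The interval of values of `y_{ij}` allowed by the constraints of `Q(G)` when the endpoints of
the edge have coordinates `a` and `b`. It is indexed by unordered pairs because edges are. -/
def edgeFibre : Sym2 ℝ → Set ℝ :=
  Sym2.lift ⟨fun a b => Set.Icc (max 0 (a + b - 1)) (min a b), fun a b => by
    simp only [add_comm a b, min_comm a b]⟩

/-- The length of `edgeFibre s(a, b)`, as a real-valued kernel; it is negative when that fibre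
is empty. -/
def fibreLength (a b : ℝ) : ℝ := min a b - max 0 (a + b - 1)

lemma mem_edgeFibre_mk {a b y : ℝ} :
    y ∈ edgeFibre s(a, b) ↔ 0 ≤ y ∧ y ≤ a ∧ y ≤ b ∧ a + b ≤ 1 + y := by
  simp only [edgeFibre, Sym2.lift_mk, Set.mem_Icc, max_le_iff, le_min_iff]
  grind

lemma volume_edgeFibre_mk (a b : ℝ) :
    volume (edgeFibre s(a, b)) = ENNReal.ofReal (fibreLength a b) :=
  Real.volume_Icc

@[fun_prop]
lemma continuous_fibreLength {X : Type*} [TopologicalSpace X] {f g : X → ℝ} (hf : Continuous f)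
    (hg : Continuous g) : Continuous fun x => fibreLength (f x) (g x) := by
  unfold fibreLength
  fun_prop

lemma fibreLength_nonneg {a b : ℝ} (ha : a ∈ Set.Icc (0 : ℝ) 1) (hb : b ∈ Set.Icc (0 : ℝ) 1) :
    0 ≤ fibreLength a b :=
  sub_nonneg.2 <| max_le (le_min ha.1 hb.1) <|
    le_min (by linarith [hb.2]) (by linarith [ha.2])

lemma fibreLength_one_sub_right (a b : ℝ) : fibreLength a (1 - b) = fibreLength a b := by
  unfold fibreLength
  grind

lemma mem_QSet_iff {V : Type*} {G : SimpleGraph V} {p : (V → ℝ) × (G.edgeSet → ℝ)} :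
    p ∈ QSet G ↔ (∀ i, p.1 i ∈ Set.Icc (0 : ℝ) 1) ∧
      ∀ e : G.edgeSet, p.2 e ∈ edgeFibre ((e : Sym2 V).map p.1) := by
  constructor
  · rintro ⟨hx, -, hy⟩
    refine ⟨hx, ?_⟩
    rintro ⟨⟨i, j⟩, h⟩
    exact mem_edgeFibre_mk.2 (hy i j h)
  · rintro ⟨hx, hy⟩
    refine ⟨hx, ?_, fun i j h => mem_edgeFibre_mk.1 (hy ⟨s(i, j), h⟩)⟩
    rintro ⟨⟨i, j⟩, h⟩
    obtain ⟨nonneg, le_left, -⟩ := mem_edgeFibre_mk.1 (hy ⟨s(i, j), h⟩)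
    exact ⟨nonneg, le_left.trans (hx i).2⟩

lemma isClosed_QSet {V : Type*} (G : SimpleGraph V) : IsClosed (QSet G) := by
  simp only [QSet, Set.mem_Icc, Set.ofPred_and, Set.ofPred_forall]
  refine .inter (isClosed_iInter fun _ => ?_) (.inter (isClosed_iInter fun _ => ?_)
    (isClosed_iInter fun _ => isClosed_iInter fun _ => isClosed_iInter fun _ => ?_))
  all_goals
    repeat' apply IsClosed.inter
    all_goals exact isClosed_le (by fun_prop) (by fun_prop)

lemma preimage_prodMk_QSet {V : Type*} {G : SimpleGraph V} {x : V → ℝ}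
    (hx : ∀ i, x i ∈ Set.Icc (0 : ℝ) 1) :
    Prod.mk x ⁻¹' QSet G
      = Set.univ.pi fun e : G.edgeSet => edgeFibre ((e : Sym2 V).map x) := by
  ext y
  simp only [Set.mem_preimage, mem_QSet_iff, Set.mem_univ_pi, hx, implies_true, true_and]

theorem volume_QSet {V : Type*} [Fintype V] (G : SimpleGraph V) [Fintype G.edgeSet] :
    volume (QSet G) = ∫⁻ x : V → unitInterval,
      ∏ e : G.edgeSet, volume (edgeFibre ((e : Sym2 V).map fun i => (x i : ℝ))) := by
  have measurable_QSet := (isClosed_QSet G).measurableSet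
  have coe_cube : MeasurePreserving (fun (x : V → unitInterval) i => (x i : ℝ)) volume
      (volume.restrict (Set.univ.pi fun _ => unitInterval)) := by
    rw [volume_pi, volume_pi, Measure.restrict_pi_pi]
    exact measurePreserving_pi _ _ fun _ => unitInterval.measurePreserving_coe
  have support_subset : Function.support (fun x => volume (Prod.mk x ⁻¹' QSet G))
      ⊆ Set.univ.pi fun _ => unitInterval := by
    intro x hx
    obtain ⟨y, hy⟩ := nonempty_of_measure_ne_zero hx
    exact fun i _ => hy.1 i
  calc volume (QSet G)
      = ∫⁻ x : V → ℝ, volume (Prod.mk x ⁻¹' QSet G) := Measure.prod_apply measurable_QSet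
    _ = ∫⁻ x in Set.univ.pi fun _ : V => unitInterval, volume (Prod.mk x ⁻¹' QSet G) :=
      (setLIntegral_eq_of_support_subset support_subset).symm
    _ = ∫⁻ x : V → unitInterval, volume (Prod.mk (fun i => (x i : ℝ)) ⁻¹' QSet G) :=
      (coe_cube.lintegral_comp (measurable_measure_prodMk_left measurable_QSet)).symm
    _ = _ := lintegral_congr fun x => by
      rw [preimage_prodMk_QSet fun i => (x i).2, volume_pi_pi]

end Fibre

section Path

open scoped ENNReal

lemma pathG_adj_iff {m : ℕ} {i j : Fin (m + 1)} :
    (pathG m).Adj i j ↔ (i : ℕ) + 1 = j ∨ (j : ℕ) + 1 = i := by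
  rw [pathG, SimpleGraph.fromRel_adj, and_iff_right_iff_imp, Ne, Fin.ext_iff]
  omega

/-- The edge of `P_m` joining the vertices `k` and `k + 1`. -/
def pathEdge {m : ℕ} (k : Fin m) : (pathG m).edgeSet :=
  ⟨s(k.castSucc, k.succ), pathG_adj_iff.2 (Or.inl rfl)⟩

lemma pathEdge_injective {m : ℕ} : Function.Injective (pathEdge (m := m)) := by
  intro k l h
  have h' : s(k.castSucc, k.succ) = s(l.castSucc, l.succ) := congrArg Subtype.val h
  simp only [Sym2.eq_iff, Fin.ext_iff, Fin.val_castSucc, Fin.val_succ] at h' ⊢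
  omega

lemma pathEdge_surjective {m : ℕ} : Function.Surjective (pathEdge (m := m)) := by
  rintro ⟨e, he⟩
  induction e with
  | h i j =>
    rcases pathG_adj_iff.1 (show (pathG m).Adj i j from he) with hij | hji
    · exact ⟨⟨i, by omega⟩, Subtype.ext (congrArg (s(i, ·)) (Fin.ext hij))⟩
    · exact ⟨⟨j, by omega⟩,
        Subtype.ext ((congrArg (s(j, ·)) (Fin.ext hji)).trans Sym2.eq_swap)⟩

/-- `fibreLength` as a `[0, ∞]`-valued kernel on the unit interval, the form required by
`lintegralOp`. -/
def pathKernel (a b : unitInterval) : ℝ≥0∞ := ENNReal.ofReal (fibreLength a b)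

lemma measurable_pathKernel : Measurable (Function.uncurry pathKernel) := by
  unfold pathKernel Function.uncurry
  fun_prop

theorem volume_QSet_pathG (m : ℕ) :
    volume (QSet (pathG m)) = ∫⁻ a, (lintegralOp pathKernel volume)^[m] 1 a := by
  rw [volume_QSet, ← lintegral_mul_prod_succ_eq_lintegral_iterate measurable_pathKernel m
    measurable_one]
  refine lintegral_congr fun x => ?_
  rw [Pi.one_apply, mul_one]
  exact (Fintype.prod_bijective pathEdge ⟨pathEdge_injective, pathEdge_surjective⟩ _ _
    fun k => (volume_edgeFibre_mk _ _).symm).symm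

end Path

section Analysis

lemma integral_mul_deriv_deriv_of_affine {u u' u'' w : ℝ → ℝ} {p q α β : ℝ} (hpq : p ≤ q)
    (hu : ∀ a, HasDerivAt u (u' a) a) (hu' : ∀ a, HasDerivAt u' (u'' a) a)
    (hu'' : Continuous u'') (hw : ∀ a ∈ Set.Icc p q, w a = α + β * a) :
    ∫ a in p..q, w a * u'' a
      = ((α + β * q) * u' q - β * u q) - ((α + β * p) * u' p - β * u p) := by
  have antideriv (a : ℝ) :
      HasDerivAt (fun a => (α + β * a) * u' a - β * u a) ((α + β * a) * u'' a) a := by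
    have affine : HasDerivAt (fun a => α + β * a) β a := by
      simpa using ((hasDerivAt_id a).const_mul β).const_add α
    exact ((affine.mul (hu' a)).sub ((hu a).const_mul β)).congr_deriv (by ring)
  rw [intervalIntegral.integral_congr (g := fun a => (α + β * a) * u'' a) fun a ha => by
    rw [Set.uIcc_of_le hpq] at ha
    simp only [hw a ha]]
  exact intervalIntegral.integral_eq_sub_of_hasDerivAt (fun a _ => antideriv a)
    (Continuous.intervalIntegrable (by fun_prop) p q)

/-- As a function of `a`, the kernel is a trapezoid with kinks at `0`, `b`, `1 - b` and `1`, so that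
its second derivative is `δ_0 - δ_b - δ_(1-b) + δ_1`. -/
theorem integral_fibreLength_mul_deriv_deriv {u u' u'' : ℝ → ℝ}
    (hu : ∀ a, HasDerivAt u (u' a) a) (hu' : ∀ a, HasDerivAt u' (u'' a) a)
    (hu'' : Continuous u'') {b : ℝ} (hb : b ∈ Set.Icc (0 : ℝ) 1) :
    ∫ a in (0 : ℝ)..1, fibreLength a b * u'' a = u 0 + u 1 - u b - u (1 - b) := by
  wlog hb_half : b ≤ 1 / 2 generalizing b
  · have reflected := this (b := 1 - b) ⟨by linarith [hb.2], by linarith [hb.1]⟩ (by linarith)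
    simp only [fibreLength_one_sub_right, sub_sub_cancel] at reflected
    linarith
  have left := integral_mul_deriv_deriv_of_affine (w := fun a => fibreLength a b)
    (α := 0) (β := 1) hb.1 hu hu' hu'' (by unfold fibreLength; grind)
  have middle := integral_mul_deriv_deriv_of_affine (w := fun a => fibreLength a b)
    (α := b) (β := 0) (p := b) (q := 1 - b) (by linarith) hu hu' hu'' (by unfold fibreLength; grind)
  have right := integral_mul_deriv_deriv_of_affine (w := fun a => fibreLength a b)
    (α := 1) (β := -1) (p := 1 - b) (q := 1) (by linarith [hb.1]) hu hu' hu''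
    (by unfold fibreLength; grind)
  have integrable (p q : ℝ) :
      IntervalIntegrable (fun a => fibreLength a b * u'' a) volume p q :=
    Continuous.intervalIntegrable (by fun_prop) p q
  rw [← intervalIntegral.integral_add_adjacent_intervals (integrable 0 b) (integrable b 1),
    ← intervalIntegral.integral_add_adjacent_intervals (integrable b (1 - b))
      (integrable (1 - b) 1), left, middle, right]
  ring

/-- The normalized cosine `φ_x` that solves the resolvent equation
`φ_x = 1 + 2x² ∫ fibreLength(a, ·) φ_x(a) da` on `[0, 1]`. -/
def cosRatio (x a : ℝ) : ℝ := Real.cos (x - 2 * x * a) / Real.cos x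

lemma continuous_cosRatio (x : ℝ) : Continuous (cosRatio x) := by
  unfold cosRatio
  fun_prop

lemma cosRatio_nonneg {x a : ℝ} (hx : |x| < Real.pi / 2) (ha : a ∈ Set.Icc (0 : ℝ) 1) :
    0 ≤ cosRatio x a := by
  have abs_angle_le : |x - 2 * x * a| ≤ |x| := by
    have factor : |1 - 2 * a| ≤ 1 := abs_le.2 ⟨by linarith [ha.2], by linarith [ha.1]⟩
    calc |x - 2 * x * a| = |x| * |1 - 2 * a| := by rw [← abs_mul]; ring_nf
      _ ≤ |x| := mul_le_of_le_one_right (abs_nonneg x) factor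
  exact div_nonneg (Real.cos_nonneg_of_mem_Icc (abs_le.1 (abs_angle_le.trans hx.le)))
    (Real.cos_nonneg_of_mem_Icc (abs_le.1 hx.le))

lemma cosRatio_le_inv_cos {x : ℝ} (hx : 0 ≤ Real.cos x) (a : ℝ) :
    cosRatio x a ≤ (Real.cos x)⁻¹ := by
  rw [← one_div]
  exact div_le_div_of_nonneg_right (Real.cos_le_one _) hx

lemma mul_integral_cosRatio (x : ℝ) : x * ∫ a in (0 : ℝ)..1, cosRatio x a = Real.tan x := by
  have double : 2 * x * ∫ a in (0 : ℝ)..1, Real.cos (x - 2 * x * a) = 2 * Real.sin x := by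
    rw [intervalIntegral.mul_integral_comp_sub_mul, integral_cos]
    ring_nf
    rw [Real.sin_neg]
    ring
  simp only [cosRatio]
  rw [intervalIntegral.integral_div, Real.tan_eq_sin_div_cos, ← mul_div_assoc]
  congr 1
  linarith

lemma cosRatio_resolvent {x b : ℝ} (hx : Real.cos x ≠ 0) (hb : b ∈ Set.Icc (0 : ℝ) 1) :
    cosRatio x b = 1 + 2 * x ^ 2 * ∫ a in (0 : ℝ)..1, fibreLength a b * cosRatio x a := by
  have angle (a : ℝ) : HasDerivAt (fun a => x - 2 * x * a) (-(2 * x)) a := by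
    simpa using ((hasDerivAt_id a).const_mul (2 * x)).const_sub x
  have hu (a : ℝ) : HasDerivAt (fun a => -cosRatio x a)
      (-(2 * x * Real.sin (x - 2 * x * a) / Real.cos x)) a :=
    (((angle a).cos.div_const _).neg).congr_deriv (by ring)
  have hu' (a : ℝ) : HasDerivAt (fun a => -(2 * x * Real.sin (x - 2 * x * a) / Real.cos x))
      (4 * x ^ 2 * cosRatio x a) a :=
    ((((angle a).sin.const_mul (2 * x)).div_const _).neg).congr_deriv (by unfold cosRatio; ring)
  have key := integral_fibreLength_mul_deriv_deriv hu hu'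
    (continuous_const.mul (continuous_cosRatio x)) hb
  have cosRatio_zero : cosRatio x 0 = 1 := by simp [cosRatio, hx]
  have cosRatio_one_sub (a : ℝ) : cosRatio x (1 - a) = cosRatio x a := by
    rw [cosRatio, ← Real.cos_neg, cosRatio]
    ring_nf
  have cosRatio_one : cosRatio x 1 = 1 := by
    simpa [cosRatio_zero] using cosRatio_one_sub 0
  simp only [mul_left_comm (fibreLength _ _), intervalIntegral.integral_const_mul,
    cosRatio_zero, cosRatio_one, cosRatio_one_sub] at key
  linarith

end Analysis

section NeumannSeries

open scoped ENNReal

lemma lintegral_unitInterval_ofReal {f : ℝ → ℝ} (hf : ContinuousOn f (Set.Icc 0 1))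
    (hf0 : ∀ a ∈ Set.Icc (0 : ℝ) 1, 0 ≤ f a) :
    ∫⁻ a : unitInterval, ENNReal.ofReal (f a) = ENNReal.ofReal (∫ a in (0 : ℝ)..1, f a) := by
  rw [intervalIntegral.integral_of_le zero_le_one, ← integral_Icc_eq_integral_Ioc,
    ofReal_integral_eq_lintegral_ofReal (hf.integrableOn_compact isCompact_Icc)
      ((ae_restrict_iff' measurableSet_Icc).2 (.of_forall hf0))]
  exact lintegral_subtype_comap measurableSet_Icc fun a => ENNReal.ofReal (f a)

/-- `cosRatio x` as a `[0, ∞]`-valued function on the unit interval, the form required by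
`lintegralOp`. -/
def pathResolvent (x : ℝ) (a : unitInterval) : ℝ≥0∞ := ENNReal.ofReal (cosRatio x a)

lemma lintegral_pathResolvent {x : ℝ} (hx : |x| < Real.pi / 2) :
    ∫⁻ a, pathResolvent x a = ENNReal.ofReal (∫ a in (0 : ℝ)..1, cosRatio x a) :=
  lintegral_unitInterval_ofReal (continuous_cosRatio x).continuousOn fun _ => cosRatio_nonneg hx

lemma lintegralOp_pathResolvent {x : ℝ} (hx : |x| < Real.pi / 2) (b : unitInterval) :
    lintegralOp pathKernel volume (pathResolvent x) b
      = ENNReal.ofReal (∫ a in (0 : ℝ)..1, fibreLength a b * cosRatio x a) := by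
  have continuous_integrand : Continuous fun a : ℝ => fibreLength a b * cosRatio x a :=
    (continuous_fibreLength continuous_id continuous_const).mul (continuous_cosRatio x)
  rw [← lintegral_unitInterval_ofReal continuous_integrand.continuousOn
    fun a ha => mul_nonneg (fibreLength_nonneg ha b.2) (cosRatio_nonneg hx ha)]
  exact lintegral_congr fun a => (ENNReal.ofReal_mul (fibreLength_nonneg a.2 b.2)).symm

lemma pathResolvent_eq {x : ℝ} (hx : |x| < Real.pi / 2) :
    pathResolvent x
      = 1 + ENNReal.ofReal (2 * x ^ 2) • lintegralOp pathKernel volume (pathResolvent x) := by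
  funext b
  have integral_nonneg : 0 ≤ ∫ a in (0 : ℝ)..1, fibreLength a b * cosRatio x a :=
    intervalIntegral.integral_nonneg zero_le_one fun a ha =>
      mul_nonneg (fibreLength_nonneg ha b.2) (cosRatio_nonneg hx ha)
  have cos_ne_zero : Real.cos x ≠ 0 := (Real.cos_pos_of_mem_Ioo (abs_lt.1 hx)).ne'
  rw [Pi.add_apply, Pi.one_apply, Pi.smul_apply, smul_eq_mul, lintegralOp_pathResolvent hx,
    ← ENNReal.ofReal_mul (by positivity), ← ENNReal.ofReal_one,
    ← ENNReal.ofReal_add zero_le_one (by positivity), ← cosRatio_resolvent cos_ne_zero b.2,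
    pathResolvent]

lemma lintegralOp_pathResolvent_le {x : ℝ} (hx0 : x ≠ 0) (hx : |x| < Real.pi / 2) :
    lintegralOp pathKernel volume (pathResolvent x)
      ≤ (ENNReal.ofReal (2 * x ^ 2))⁻¹ • pathResolvent x := by
  intro b
  have scaled_le : ENNReal.ofReal (2 * x ^ 2) * lintegralOp pathKernel volume (pathResolvent x) b
      ≤ pathResolvent x b :=
    le_add_self.trans_eq (congrFun (pathResolvent_eq hx) b).symm
  have scale_ne_zero : ENNReal.ofReal (2 * x ^ 2) ≠ 0 := by simpa using hx0
  exact (ENNReal.mul_le_iff_le_inv scale_ne_zero ENNReal.ofReal_ne_top).1 scaled_le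

lemma pathResolvent_le {x y : ℝ} (hx : |x| < Real.pi / 2) (hy : |y| < Real.pi / 2) :
    pathResolvent x ≤ ENNReal.ofReal (Real.cos x)⁻¹ • pathResolvent y := by
  intro a
  have one_le : 1 ≤ pathResolvent y a :=
    le_self_add.trans_eq (congrFun (pathResolvent_eq hy) a).symm
  calc pathResolvent x a ≤ ENNReal.ofReal (Real.cos x)⁻¹ :=
        ENNReal.ofReal_le_ofReal
          (cosRatio_le_inv_cos (Real.cos_pos_of_mem_Ioo (abs_lt.1 hx)).le a)
    _ ≤ ENNReal.ofReal (Real.cos x)⁻¹ * pathResolvent y a := le_mul_of_one_le_right' one_le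

theorem hasSum_volume_QSet_pathG {x : ℝ} (hx : |x| < Real.pi / 2) :
    HasSum (fun m => ENNReal.ofReal (2 * x ^ 2) ^ m * volume (QSet (pathG m)))
      (∫⁻ a, pathResolvent x a) := by
  obtain ⟨y, hxy, hy⟩ := exists_between hx
  have hy0 : 0 < y := (abs_nonneg x).trans_lt hxy
  have hy' : |y| < Real.pi / 2 := by rwa [abs_of_pos hy0]
  have ratio_lt_one : ENNReal.ofReal (2 * x ^ 2) * (ENNReal.ofReal (2 * y ^ 2))⁻¹ < 1 := by
    have sq_lt : x ^ 2 < y ^ 2 := sq_lt_sq.2 (by rwa [abs_of_pos hy0])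
    rw [← ENNReal.ofReal_inv_of_pos (by positivity), ← ENNReal.ofReal_mul (by positivity),
      ENNReal.ofReal_lt_one, ← div_eq_mul_inv, div_lt_one (by positivity)]
    linarith
  simp only [volume_QSet_pathG]
  exact hasSum_lintegral_iterate_lintegralOp measurable_pathKernel ENNReal.ofReal_ne_top
    (ENNReal.inv_ne_top.2 (by simpa using by positivity)) ENNReal.ofReal_ne_top ratio_lt_one
    measurable_one (pathResolvent_eq hx) (lintegralOp_pathResolvent_le hy0.ne' hy')
    (pathResolvent_le hx hy') (by rw [lintegral_pathResolvent hy']; exact ENNReal.ofReal_ne_top)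

end NeumannSeries

/-- For `|x| < π/2`, `∑_{m ≥ 0} 2^m * vol Q(P_m) * x^(2m+1) = tan x`. -/
theorem hasSum_volume_QSet_path_tan (x : ℝ) (hx : |x| < Real.pi / 2) :
    HasSum (fun m : ℕ =>
      2 ^ m * (volume (QSet (pathG m))).toReal * x ^ (2 * m + 1)) (Real.tan x) := by
  have neumann := hasSum_volume_QSet_pathG hx
  rw [lintegral_pathResolvent hx] at neumann
  have integral_nonneg : 0 ≤ ∫ a in (0 : ℝ)..1, cosRatio x a :=
    intervalIntegral.integral_nonneg zero_le_one fun _ => cosRatio_nonneg hx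
  have tsum_ne_top := neumann.tsum_eq.trans_ne ENNReal.ofReal_ne_top
  have real_sum := (ENNReal.hasSum_toReal tsum_ne_top).mul_left x
  rw [← ENNReal.tsum_toReal_eq (ENNReal.ne_top_of_tsum_ne_top tsum_ne_top), neumann.tsum_eq,
    ENNReal.toReal_ofReal integral_nonneg, mul_integral_cosRatio] at real_sum
  refine real_sum.congr_fun fun m => ?_
  rw [ENNReal.toReal_mul, ENNReal.toReal_pow, ENNReal.toReal_ofReal (by positivity)]
  ring
end
end

section
/- For every m >= 3, the 2m-dimensional Lebesgue volume of Q(C_m) equals m * A_{2m-1} / (2^m * (2m)!), where A_{2m-1} is the Euler number counting alternating permutations of {1, ..., 2m-1}. -/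
open MeasureTheory Filter

noncomputable section

/-- The Euler number `A k`: the number of alternating permutations `σ` of
`{1, …, k}`, i.e. with `σ 1 > σ 2 < σ 3 > σ 4 < ⋯` (here written 0-indexed). -/
def eulerNumber (k : ℕ) : ℕ :=
  Nat.card {σ : Equiv.Perm (Fin k) //
    ∀ (i : ℕ) (h : i + 1 < k),
      (Even i → σ ⟨i + 1, h⟩ < σ ⟨i, Nat.lt_of_succ_lt h⟩) ∧
      (Odd i → σ ⟨i, Nat.lt_of_succ_lt h⟩ < σ ⟨i + 1, h⟩)}

/-- The cycle `C_m` with `m` vertices and (for `m ≥ 3`) `m` edges. -/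
def cycleG (m : ℕ) : SimpleGraph (Fin m) :=
  SimpleGraph.fromRel (fun i j => ((i : ℕ) + 1) % m = (j : ℕ))

instance (m : ℕ) : DecidableRel (cycleG m).Adj := fun i j =>
  decidable_of_iff _ (SimpleGraph.fromRel_adj _ i j).symm

/-!
Over a point `x` of the cube, `Q(G)` is a box with one side
`[max 0 (x i + x j - 1), min (x i) (x j)]` for each edge. Such an interval has half the length of
`[0, min (t (x i)) (t (x j))]`, where `t` is the tent map. As `t` preserves Lebesgue measure on
`[0, 1]`, the volume of `Q(G)` is `2 ^ (-|E|)` times that of the order polytope of the incidence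
poset of `G`, which by Stanley's theorem is the number of linear extensions divided by
`(|V| + |E|)!`.

The incidence poset of `C_m` is the crown on `2 * m` elements. In a linear extension the last
element is one of the `m` vertices, all equivalent by rotation, and removing it leaves a fence on
`2 * m - 1` elements, whose linear extensions are the alternating permutations up to reversal.
-/

section OrderPolytope

variable {α : Type*} {n : ℕ}

/-- Bijections `α ≃ Fin n` listing `α` compatibly with `r`. The relation `r` need not be an order:
a set of cover relations, or any other generating set of comparisons, serves as well. -/
def IsLinearExtension (r : α → α → Prop) (σ : α ≃ Fin n) : Prop :=
  ∀ ⦃a b⦄, r a b → σ a ≤ σ b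

/-- Stanley's order polytope of (the preorder generated by) `r`. -/
def orderPolytope (r : α → α → Prop) : Set (α → ℝ) :=
  {z ∈ Set.Icc 0 1 | ∀ a b, r a b → z a ≤ z b}

/-- The points of the unit cube whose coordinates are ordered as prescribed by `σ`. These simplices
triangulate every order polytope, up to their null boundaries. -/
def orderSimplex (σ : α ≃ Fin n) : Set (α → ℝ) :=
  {z ∈ Set.Icc 0 1 | StrictMono (z ∘ σ.symm)}

lemma le_iff_le_of_mem_orderSimplex {σ : α ≃ Fin n} {z : α → ℝ} (hz : z ∈ orderSimplex σ)
    (a b : α) : z a ≤ z b ↔ σ a ≤ σ b := by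
  simpa using hz.2.le_iff_le (a := σ a) (b := σ b)

lemma mem_orderPolytope_iff_isLinearExtension {r : α → α → Prop} {σ : α ≃ Fin n} {z : α → ℝ}
    (hz : z ∈ orderSimplex σ) : z ∈ orderPolytope r ↔ IsLinearExtension r σ := by
  simp only [orderPolytope, Set.mem_ofPred_eq, hz.1, true_and, IsLinearExtension,
    le_iff_le_of_mem_orderSimplex hz]

lemma eq_of_mem_orderSimplex {σ τ : α ≃ Fin n} {z : α → ℝ} (hσ : z ∈ orderSimplex σ)
    (hτ : z ∈ orderSimplex τ) : σ = τ := by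
  have hz : z.Injective := by simpa using hσ.2.injective
  have h : z ∘ σ.symm = z ∘ τ.symm :=
    (hσ.2.range_inj hτ.2).1 (by simp only [EquivLike.range_comp])
  exact Equiv.symm_bijective.injective (Equiv.coe_fn_injective (hz.comp_left h))

lemma measurableSet_orderSimplex (σ : α ≃ Fin n) : MeasurableSet (orderSimplex σ) := by
  have : Finite α := .of_equiv _ σ.symm
  have hinter : orderSimplex σ = Set.Icc 0 1 ∩
      ⋂ i, ⋂ j, ⋂ (_ : i < j), {z : α → ℝ | z (σ.symm i) < z (σ.symm j)} := by
    ext z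
    simp [orderSimplex, StrictMono]
  rw [hinter]
  refine measurableSet_Icc.inter (.iInter fun i ↦ .iInter fun j ↦ .iInter fun _ ↦ ?_)
  exact measurableSet_lt (by fun_prop) (by fun_prop)

lemma measurableSet_orderPolytope [Countable α] (r : α → α → Prop) :
    MeasurableSet (orderPolytope r) := by
  refine IsClosed.measurableSet ?_
  simp only [orderPolytope, Set.ofPred_and, Set.ofPred_forall]
  exact isClosed_Icc.inter <| isClosed_iInter fun a ↦ isClosed_iInter fun b ↦
    isClosed_iInter fun _ ↦ isClosed_le (continuous_apply a) (continuous_apply b)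

variable [Fintype α]

lemma exists_mem_orderSimplex (hn : Fintype.card α = n) {z : α → ℝ} (hz : z ∈ Set.Icc 0 1)
    (hinj : z.Injective) : ∃ σ : α ≃ Fin n, z ∈ orderSimplex σ := by
  let _ : LinearOrder α := .lift' z hinj
  have hmono : StrictMono z := fun _ _ h ↦ h
  exact ⟨(Fintype.orderIsoFinOfCardEq α hn).symm.toEquiv, hz,
    hmono.comp (Fintype.orderIsoFinOfCardEq α hn).strictMono⟩

lemma volume_orderSimplex_eq_refl (σ : α ≃ Fin n) :
    volume (orderSimplex σ) = volume (orderSimplex (Equiv.refl (Fin n))) := by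
  rw [← (volume_preserving_arrowCongr' σ (.refl ℝ) (.id volume)).measure_preimage_equiv]
  congr 1
  ext z
  have hcomp : MeasurableEquiv.arrowCongr' σ (.refl ℝ) z = z ∘ σ.symm := rfl
  simp [orderSimplex, hcomp, Pi.le_def, σ.symm.forall_congr_left]

lemma ae_injective : ∀ᵐ z : α → ℝ, z.Injective := by
  classical
  have hne (a b : α) (hab : a ≠ b) : ∀ᵐ z : α → ℝ, z a ≠ z b := by
    let H : Submodule ℝ (α → ℝ) :=
      LinearMap.ker (LinearMap.proj (R := ℝ) (φ := fun _ : α ↦ ℝ) a - LinearMap.proj b)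
    have hH : H ≠ ⊤ := fun h ↦ by
      have : Pi.single a 1 ∈ H := h ▸ Submodule.mem_top
      simp [H, hab.symm] at this
    refine measure_mono_null (fun z hz ↦ ?_) (Measure.addHaar_submodule volume H hH)
    simpa [H, sub_eq_zero] using hz
  have : ∀ᵐ z : α → ℝ, ∀ a b, a ≠ b → z a ≠ z b := by simpa only [ae_all_iff] using hne
  filter_upwards [this] with z hz a b
  exact not_imp_not.1 (hz a b)

lemma orderPolytope_ae_eq_iUnion (hn : Fintype.card α = n) (r : α → α → Prop) :
    orderPolytope r =ᵐ[volume]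
      ⋃ σ : {σ : α ≃ Fin n // IsLinearExtension r σ}, orderSimplex σ.1 := by
  filter_upwards [ae_injective] with z hinj
  refine propext ⟨fun hz ↦ ?_, fun hz ↦ ?_⟩
  · obtain ⟨σ, hσ⟩ := exists_mem_orderSimplex hn hz.1 hinj
    exact Set.mem_iUnion.2 ⟨⟨σ, (mem_orderPolytope_iff_isLinearExtension hσ).1 hz⟩, hσ⟩
  · obtain ⟨⟨σ, hr⟩, hσ⟩ := Set.mem_iUnion.1 hz
    exact (mem_orderPolytope_iff_isLinearExtension hσ).2 hr

lemma volume_orderPolytope_eq_card_mul (hn : Fintype.card α = n) (r : α → α → Prop) :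
    volume (orderPolytope r) = Nat.card {σ : α ≃ Fin n // IsLinearExtension r σ} *
      volume (orderSimplex (Equiv.refl (Fin n))) := by
  classical
  rw [measure_congr (orderPolytope_ae_eq_iUnion hn r), measure_iUnion]
  · simp [volume_orderSimplex_eq_refl, tsum_fintype]
  · exact fun σ τ hne ↦ Set.disjoint_left.2 fun z hσ hτ ↦
      hne (Subtype.ext (eq_of_mem_orderSimplex hσ hτ))
  · exact fun σ ↦ measurableSet_orderSimplex σ.1

-- The unit cube, the order polytope of the empty relation, is cut into `n!` congruent simplices.
lemma volume_orderSimplex (σ : α ≃ Fin n) :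
    volume (orderSimplex σ) = (n.factorial : ENNReal)⁻¹ := by
  have hcube : volume (orderPolytope (⊥ : Fin n → Fin n → Prop)) = 1 := by
    have : orderPolytope (⊥ : Fin n → Fin n → Prop) = Set.Icc 0 1 := by
      simp [orderPolytope, Set.Icc]
    simp [this, Real.volume_Icc_pi]
  rw [volume_orderPolytope_eq_card_mul (Fintype.card_fin n)] at hcube
  have hcard : Nat.card {σ : Fin n ≃ Fin n // IsLinearExtension ⊥ σ} = n.factorial := by
    simp [IsLinearExtension, Fintype.card_perm]
  rw [volume_orderSimplex_eq_refl]
  refine ENNReal.eq_inv_of_mul_eq_one_left ?_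
  rwa [hcard, mul_comm] at hcube

theorem volume_orderPolytope (hn : Fintype.card α = n) (r : α → α → Prop) :
    volume (orderPolytope r) =
      Nat.card {σ : α ≃ Fin n // IsLinearExtension r σ} / (n.factorial : ENNReal) := by
  rw [volume_orderPolytope_eq_card_mul hn, volume_orderSimplex, ENNReal.div_eq_inv_mul, mul_comm]

end OrderPolytope

section TentMap

/-- The tent map `x ↦ min (2x) (2 - 2x)`, which folds `[0, 1]` onto itself two to one. -/
def tentMap (x : ℝ) : ℝ := min (2 * x) (2 - 2 * x)

lemma measurable_tentMap : Measurable tentMap := by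
  unfold tentMap
  fun_prop

lemma tentMap_preimage_Ici (a : ℝ) : tentMap ⁻¹' Set.Ici a = Set.Icc (a / 2) (1 - a / 2) := by
  ext x
  simp only [tentMap, Set.mem_preimage, Set.mem_Ici, le_min_iff, Set.mem_Icc]
  constructor <;> rintro ⟨_, _⟩ <;> constructor <;> linarith

lemma measurePreserving_tentMap : MeasurePreserving tentMap
    (volume.restrict (Set.Icc 0 1)) (volume.restrict (Set.Icc 0 1)) := by
  refine ⟨measurable_tentMap, ?_⟩
  have := Measure.isFiniteMeasure_map (volume.restrict (Set.Icc (0 : ℝ) 1)) tentMap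
  refine Measure.ext_of_Ici _ _ fun a ↦ ?_
  have hIci : Set.Ici a ∩ Set.Icc 0 1 = Set.Icc (max a 0) 1 := by
    ext x
    simp [and_assoc]
  rw [Measure.map_apply measurable_tentMap measurableSet_Ici, tentMap_preimage_Ici,
    Measure.restrict_apply measurableSet_Icc, Measure.restrict_apply measurableSet_Ici, hIci,
    Set.Icc_inter_Icc, Real.volume_Icc, Real.volume_Icc]
  congr 1
  grind

lemma measurePreserving_tentMap_pi {ι : Type*} [Fintype ι] :
    MeasurePreserving (fun (x : ι → ℝ) i ↦ tentMap (x i))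
      (volume.restrict (Set.Icc 0 1)) (volume.restrict (Set.Icc 0 1)) := by
  have h : (volume : Measure (ι → ℝ)).restrict (Set.Icc 0 1) =
      Measure.pi fun _ ↦ volume.restrict (Set.Icc 0 1) := by
    rw [← Set.pi_univ_Icc, volume_pi, Measure.restrict_pi_pi]
    rfl
  rw [h]
  exact measurePreserving_pi _ _ fun _ ↦ measurePreserving_tentMap

/-- The lower Fréchet bound `max 0 (a + b - 1)` of a pair. Over a point `x` of the unit cube, the
edge coordinate `y i j` of `QSet` ranges from this bound at `{x i, x j}` up to `min (x i) (x j)`. -/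
def frechetLower : Sym2 ℝ → ℝ :=
  Sym2.lift ⟨fun a b ↦ max 0 (a + b - 1), fun a b ↦ by simp only [add_comm a b]⟩

lemma frechetLower_mk (a b : ℝ) : frechetLower s(a, b) = max 0 (a + b - 1) := rfl

lemma inf_sub_frechetLower (p : Sym2 ℝ) : p.inf - frechetLower p = 2⁻¹ * (p.map tentMap).inf := by
  induction p with
  | _ a b =>
    simp only [Sym2.inf_mk, frechetLower_mk, Sym2.map_mk, tentMap]
    grind

lemma volume_Icc_frechetLower_inf (p : Sym2 ℝ) :
    volume (Set.Icc (frechetLower p) p.inf) = 2⁻¹ * ENNReal.ofReal (p.map tentMap).inf := by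
  rw [Real.volume_Icc, inf_sub_frechetLower, ENNReal.ofReal_mul (by norm_num),
    ENNReal.ofReal_inv_of_pos two_pos, ENNReal.ofReal_ofNat]

end TentMap

section Fibers

lemma le_inf_map_iff {ι β : Type*} [SemilatticeInf β] {f : ι → β} {t : β} {e : Sym2 ι} :
    t ≤ (e.map f).inf ↔ ∀ i ∈ e, t ≤ f i := by
  induction e with
  | _ i j => simp

lemma measure_prod_eq_setLIntegral {β γ : Type*} [MeasurableSpace β] [MeasurableSpace γ]
    {μ : Measure β} {ν : Measure γ} [SFinite ν] {s : Set (β × γ)} {t : Set β}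
    (hs : MeasurableSet s) (hst : ∀ p ∈ s, p.1 ∈ t) :
    μ.prod ν s = ∫⁻ x in t, ν (Prod.mk x ⁻¹' s) ∂μ := by
  rw [Measure.prod_apply hs]
  refine (setLIntegral_eq_of_support_subset fun x hx ↦ ?_).symm
  obtain ⟨y, hy⟩ := nonempty_of_measure_ne_zero hx
  exact hst _ hy

variable {V : Type*} (G : SimpleGraph V)

/-- The comparisons defining the incidence poset of `G` on its vertices and edges: an edge lies
below each of its two endpoints. -/
def incidenceRel : V ⊕ G.edgeSet → V ⊕ G.edgeSet → Prop
  | .inr e, .inl v => v ∈ e.1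
  | _, _ => False

lemma preimage_QSet {x : V → ℝ} (hx : x ∈ Set.Icc 0 1) :
    Prod.mk x ⁻¹' QSet G = Set.univ.pi fun e : G.edgeSet ↦
      Set.Icc (frechetLower (e.1.map x)) (e.1.map x).inf := by
  ext y
  simp only [QSet, Set.mem_preimage, Set.mem_ofPred_eq, Set.mem_univ_pi]
  constructor
  · rintro ⟨-, -, h⟩ ⟨e, he⟩
    induction e with
    | _ i j =>
      obtain ⟨h0, hi, hj, hij⟩ := h i j he
      exact ⟨max_le h0 (sub_le_iff_le_add'.2 hij), le_min hi hj⟩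
  · intro h
    have hbounds (i j : V) (hij : G.Adj i j) : 0 ≤ y ⟨s(i, j), hij⟩ ∧
        y ⟨s(i, j), hij⟩ ≤ x i ∧ y ⟨s(i, j), hij⟩ ≤ x j ∧
        x i + x j ≤ 1 + y ⟨s(i, j), hij⟩ := by
      obtain ⟨hlow, hup⟩ := h ⟨s(i, j), hij⟩
      obtain ⟨h0, hsum⟩ := max_le_iff.1 hlow
      obtain ⟨hi, hj⟩ := le_min_iff.1 hup
      exact ⟨h0, hi, hj, sub_le_iff_le_add'.1 hsum⟩
    refine ⟨fun i ↦ ⟨hx.1 i, hx.2 i⟩, ?_, hbounds⟩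
    rintro ⟨e, he⟩
    induction e with
    | _ i j =>
      obtain ⟨h0, hi, -⟩ := hbounds i j he
      exact ⟨h0, hi.trans (hx.2 i)⟩

lemma preimage_orderPolytope_incidenceRel {x : V → ℝ} (hx : x ∈ Set.Icc 0 1) :
    Prod.mk x ⁻¹' ((MeasurableEquiv.sumPiEquivProdPi fun _ ↦ ℝ).symm ⁻¹'
        orderPolytope (incidenceRel G)) =
      Set.univ.pi fun e : G.edgeSet ↦ Set.Icc 0 (e.1.map x).inf := by
  ext y
  simp only [Set.mem_preimage, Set.mem_univ_pi, Set.mem_Icc, le_inf_map_iff]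
  constructor
  · rintro ⟨⟨h0, -⟩, hle⟩ e
    exact ⟨h0 (.inr e), fun v hv ↦ hle (.inr e) (.inl v) hv⟩
  · intro h
    refine ⟨⟨?_, ?_⟩, ?_⟩
    · rintro (v | e)
      exacts [hx.1 v, (h e).1]
    · rintro (v | e)
      exacts [hx.2 v, ((h e).2 _ e.1.out_fst_mem).trans (hx.2 _)]
    · rintro (u | e) (v | f) hr
      exacts [hr.elim, hr.elim, (h e).2 v hr, hr.elim]

lemma measurableSet_QSet [Countable V] : MeasurableSet (QSet G) := by
  refine IsClosed.measurableSet ?_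
  simp only [QSet, Set.mem_Icc, Set.ofPred_and, Set.ofPred_forall]
  refine .inter (isClosed_iInter fun i ↦ ?_) (.inter (isClosed_iInter fun e ↦ ?_)
    (isClosed_iInter fun i ↦ isClosed_iInter fun j ↦ isClosed_iInter fun hij ↦ ?_))
  · exact .inter (isClosed_le (by fun_prop) (by fun_prop)) (isClosed_le (by fun_prop) (by fun_prop))
  · exact .inter (isClosed_le (by fun_prop) (by fun_prop)) (isClosed_le (by fun_prop) (by fun_prop))
  · refine .inter ?_ (.inter ?_ (.inter ?_ ?_)) <;> exact isClosed_le (by fun_prop) (by fun_prop)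

variable [Fintype G.edgeSet]

/-- The volume of the fiber over `x` of the order polytope of the incidence poset of `G`. -/
def edgeWeight (x : V → ℝ) : ENNReal := ∏ e : G.edgeSet, ENNReal.ofReal (e.1.map x).inf

lemma measurable_edgeWeight : Measurable (edgeWeight G) := by
  refine Finset.measurable_prod _ fun e _ ↦ ENNReal.measurable_ofReal.comp ?_
  induction e.1 with
  | _ i j =>
    simp only [Sym2.map_mk, Sym2.inf_mk]
    fun_prop

variable [Fintype V]

lemma volume_orderPolytope_incidenceRel :
    volume (orderPolytope (incidenceRel G)) = ∫⁻ x in Set.Icc 0 1, edgeWeight G x := by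
  have h := (volume_measurePreserving_sumPiEquivProdPi fun _ : V ⊕ G.edgeSet ↦ ℝ).symm
  rw [← h.measure_preimage_equiv, Measure.volume_eq_prod, measure_prod_eq_setLIntegral]
  · refine setLIntegral_congr_fun measurableSet_Icc fun x hx ↦ ?_
    rw [preimage_orderPolytope_incidenceRel G hx, volume_pi_pi]
    simp [edgeWeight]
  · exact h.measurable (measurableSet_orderPolytope _)
  · exact fun p hp ↦ ⟨fun v ↦ hp.1.1 (.inl v), fun v ↦ hp.1.2 (.inl v)⟩

lemma volume_QSet_eq_setLIntegral :
    volume (QSet G) = ∫⁻ x : V → ℝ in Set.Icc 0 1,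
      2⁻¹ ^ Fintype.card G.edgeSet * edgeWeight G (fun v ↦ tentMap (x v)) := by
  rw [Measure.volume_eq_prod, measure_prod_eq_setLIntegral (measurableSet_QSet G)]
  · refine setLIntegral_congr_fun measurableSet_Icc fun x hx ↦ ?_
    rw [preimage_QSet G hx, volume_pi_pi]
    simp only [volume_Icc_frechetLower_inf, Sym2.map_map, Finset.prod_mul_distrib, edgeWeight]
    simp only [Finset.prod_const, Finset.card_univ, Function.comp_def]
  · exact fun p hp ↦ ⟨fun v ↦ (hp.1 v).1, fun v ↦ (hp.1 v).2⟩

lemma volume_QSet_eq_mul_volume_orderPolytope :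
    volume (QSet G) =
      2⁻¹ ^ Fintype.card G.edgeSet * volume (orderPolytope (incidenceRel G)) := by
  have htent := measurePreserving_tentMap_pi (ι := V)
  have hmeas : Measurable fun x : V → ℝ ↦ edgeWeight G fun v ↦ tentMap (x v) :=
    (measurable_edgeWeight G).comp htent.measurable
  rw [volume_QSet_eq_setLIntegral, volume_orderPolytope_incidenceRel,
    ← htent.lintegral_comp (measurable_edgeWeight G),
    lintegral_const_mul _ hmeas]

theorem volume_QSet_s9 {n : ℕ} (hn : Fintype.card V + Fintype.card G.edgeSet = n) :
    volume (QSet G) =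
      Nat.card {σ : V ⊕ G.edgeSet ≃ Fin n // IsLinearExtension (incidenceRel G) σ} /
        ((2 : ENNReal) ^ Fintype.card G.edgeSet * (n.factorial : ENNReal)) := by
  rw [volume_QSet_eq_mul_volume_orderPolytope, volume_orderPolytope (by simpa using hn),
    ← ENNReal.inv_pow, div_eq_mul_inv, div_eq_mul_inv, ENNReal.mul_inv (by simp) (by simp),
    mul_left_comm]

end Fibers

section LinearExtension

variable {α β : Type*} {n : ℕ}

lemma isLinearExtension_trans_iff {r : α → α → Prop} {s : β → β → Prop} (φ : r ≃r s)
    (σ : β ≃ Fin n) : IsLinearExtension r (φ.toEquiv.trans σ) ↔ IsLinearExtension s σ := by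
  simp only [IsLinearExtension, ← φ.map_rel_iff, φ.surjective.forall₂]
  rfl

lemma card_isLinearExtension_congr {r : α → α → Prop} {s : β → β → Prop} (φ : r ≃r s) (a : α)
    (t : Fin n) :
    Nat.card {σ : β ≃ Fin n // IsLinearExtension s σ ∧ σ (φ a) = t} =
      Nat.card {σ : α ≃ Fin n // IsLinearExtension r σ ∧ σ a = t} :=
  Nat.card_congr <| (φ.toEquiv.symm.equivCongr (.refl _)).subtypeEquiv fun σ ↦
    and_congr (isLinearExtension_trans_iff φ σ).symm .rfl

lemma card_isLinearExtension_eq_sum [Fintype α] (r : α → α → Prop) (t : Fin n) :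
    Nat.card {σ : α ≃ Fin n // IsLinearExtension r σ} =
      ∑ a, Nat.card {σ : α ≃ Fin n // IsLinearExtension r σ ∧ σ a = t} := by
  rw [← Nat.card_sigma]
  let position (σ : {σ : α ≃ Fin n // IsLinearExtension r σ}) : α := σ.1.symm t
  refine Nat.card_congr ((Equiv.sigmaFiberEquiv position).symm.trans (.sigmaCongrRight fun a ↦ ?_))
  exact (Equiv.subtypeSubtypeEquivSubtypeInter (IsLinearExtension r)
    (fun σ : α ≃ Fin n ↦ σ.symm t = a)).trans (.subtypeEquivRight fun σ ↦
    and_congr_right' (by rw [Equiv.symm_apply_eq, eq_comm]))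

/-- Extending a bijection `β ≃ Fin n` by sending the extra point to the top element. -/
def equivWithTop : (β ≃ Fin n) ≃ {σ : Option β ≃ Fin (n + 1) // σ none = Fin.last n} :=
  ((Equiv.refl β).equivCongr (finSuccAboveEquiv (Fin.last n))).trans
    (Equiv.optionSubtype (Fin.last n)).symm

lemma equivWithTop_some (τ : β ≃ Fin n) (b : β) :
    (equivWithTop τ).1 (some b) = (τ b).castSucc := by
  simp [equivWithTop, finSuccAboveEquiv_apply]

lemma isLinearExtension_equivWithTop_iff {r : Option β → Option β → Prop}
    (hr : ∀ b, ¬ r none (some b)) (τ : β ≃ Fin n) :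
    IsLinearExtension r (equivWithTop τ).1 ↔
      IsLinearExtension (fun a b ↦ r (some a) (some b)) τ := by
  simp only [IsLinearExtension, Option.forall, equivWithTop_some, Fin.castSucc_le_castSucc_iff,
    (equivWithTop τ).2, Fin.le_last]
  simp [hr]

lemma card_isLinearExtension_none_eq_last {r : Option β → Option β → Prop}
    (hr : ∀ b, ¬ r none (some b)) :
    Nat.card {σ : Option β ≃ Fin (n + 1) // IsLinearExtension r σ ∧ σ none = Fin.last n} =
      Nat.card {τ : β ≃ Fin n // IsLinearExtension (fun a b ↦ r (some a) (some b)) τ} := by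
  let e := equivWithTop.subtypeEquiv
    (p := fun τ : β ≃ Fin n ↦ IsLinearExtension (fun a b ↦ r (some a) (some b)) τ)
    (q := fun σ ↦ IsLinearExtension r σ.1) fun τ ↦ (isLinearExtension_equivWithTop_iff hr τ).symm
  exact (Nat.card_congr (e.trans ((Equiv.subtypeSubtypeEquivSubtypeInter
    (fun σ : Option β ≃ Fin (n + 1) ↦ σ none = Fin.last n) (IsLinearExtension r)).trans
      (.subtypeEquivRight fun σ ↦ and_comm)))).symm

end LinearExtension

section Fence

/-- The comparisons `0 < 1 > 2 < 3 > ⋯` defining the fence (zigzag poset) on `Fin n`. -/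
def fenceRel {n : ℕ} (p q : Fin n) : Prop :=
  Even p.val ∧ (q.val = p.val + 1 ∨ p.val = q.val + 1)

-- Alternating permutations start with a descent, while the fence starts with an ascent.
lemma card_isLinearExtension_fenceRel (n : ℕ) :
    Nat.card {σ : Fin n ≃ Fin n // IsLinearExtension fenceRel σ} = eulerNumber n := by
  refine Nat.card_congr ((Equiv.equivCongr (.refl _) Fin.revPerm).subtypeEquiv fun σ ↦ ?_)
  have hne (i : ℕ) (h : i + 1 < n) : σ ⟨i, Nat.lt_of_succ_lt h⟩ ≠ σ ⟨i + 1, h⟩ := by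
    simp
  simp only [Equiv.equivCongr_apply_apply, Equiv.refl_symm, Equiv.refl_apply, Fin.revPerm_apply,
    Fin.rev_lt_rev]
  constructor
  · intro hσ i h
    exact ⟨fun hi ↦ (hσ ⟨hi, .inl rfl⟩).lt_of_ne (hne i h),
      fun hi ↦ (hσ ⟨hi.add_one, .inr rfl⟩).lt_of_ne (hne i h).symm⟩
  · rintro hσ ⟨p, hp⟩ ⟨q, hq⟩ ⟨heven, rfl | rfl⟩
    · exact ((hσ p hq).1 heven).le
    · exact ((hσ q hp).2 (by simpa [Nat.even_add_one] using heven)).le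

end Fence

section Crown

/-- The comparisons defining the crown (cyclic fence) on `2 * m` elements: minimal element `inr i`
lies below the two maximal elements `inl i` and `inl (i + 1)`. -/
def crownRel {m : ℕ} [NeZero m] : Fin m ⊕ Fin m → Fin m ⊕ Fin m → Prop
  | .inr i, .inl j => j = i ∨ j = i + 1
  | _, _ => False

/-- Cutting the crown open at the maximal element `inl 0`: walking around the crown from there, one
meets `inr 0, inl 1, inr 1, inl 2, …, inr k`. -/
def crownUnroll (k : ℕ) : Option (Fin (2 * k + 1)) → Fin (k + 1) ⊕ Fin (k + 1)
  | none => .inl 0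
  | some p => if h : Even p.val then .inr ⟨p / 2, by omega⟩ else .inl ⟨p / 2 + 1, by grind⟩

lemma crownUnroll_bijective (k : ℕ) : (crownUnroll k).Bijective := by
  refine (Fintype.bijective_iff_injective_and_card _).2 ⟨?_, ?_⟩
  · rintro (_ | p) (_ | q) h <;> grind [crownUnroll]
  · simp only [Fintype.card_option, Fintype.card_sum, Fintype.card_fin]
    ring

lemma crownRel_crownUnroll_some_iff {k : ℕ} (p q : Fin (2 * k + 1)) :
    crownRel (crownUnroll k (some p)) (crownUnroll k (some q)) ↔ fenceRel p q := by
  simp only [crownUnroll, fenceRel]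
  split_ifs with hp hq hq <;>
    simp only [crownRel, Fin.ext_iff, Fin.val_add_one, Fin.val_last] <;> grind

lemma card_isLinearExtension_crownRel_inl_zero_eq_last (k : ℕ) :
    Nat.card {σ : Fin (k + 1) ⊕ Fin (k + 1) ≃ Fin (2 * k + 1 + 1) //
      IsLinearExtension crownRel σ ∧ σ (.inl 0) = Fin.last _} = eulerNumber (2 * k + 1) := by
  let e := Equiv.ofBijective (crownUnroll k) (crownUnroll_bijective k)
  have hr (p : Fin (2 * k + 1)) : ¬ crownRel (e none) (e (some p)) := id
  calc
    _ = Nat.card {σ : Option (Fin (2 * k + 1)) ≃ Fin (2 * k + 1 + 1) //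
          IsLinearExtension (fun a b ↦ crownRel (e a) (e b)) σ ∧ σ none = Fin.last _} :=
      card_isLinearExtension_congr (RelIso.preimage e crownRel) none _
    _ = Nat.card {τ : Fin (2 * k + 1) ≃ Fin (2 * k + 1) //
          IsLinearExtension (fun p q ↦ crownRel (e (some p)) (e (some q))) τ} :=
      card_isLinearExtension_none_eq_last hr
    _ = eulerNumber (2 * k + 1) := by
      rw [← card_isLinearExtension_fenceRel]
      congr! with σ p q
      exact crownRel_crownUnroll_some_iff p q

end Crown

section Cycle

variable {m : ℕ} [NeZero m]

lemma cycleG_adj {i j : Fin m} : (cycleG m).Adj i j ↔ i ≠ j ∧ (i + 1 = j ∨ j + 1 = i) := by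
  simp only [cycleG, SimpleGraph.fromRel_adj, Fin.ext_iff, Fin.val_add, Fin.val_one',
    Nat.add_mod_mod]

lemma fin_add_one_ne_self (hm : 2 ≤ m) (i : Fin m) : i + 1 ≠ i := by
  simpa using Nat.ne_of_gt hm

/-- The edges of the cycle, indexed by their first endpoint in cyclic order. -/
def cycleEdge (hm : 2 ≤ m) (i : Fin m) : (cycleG m).edgeSet :=
  ⟨s(i, i + 1), cycleG_adj.2 ⟨(fin_add_one_ne_self hm i).symm, .inl rfl⟩⟩

lemma cycleEdge_bijective (hm : 3 ≤ m) :
    (cycleEdge (Nat.le_of_succ_le hm)).Bijective := by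
  constructor
  · intro i j h
    obtain ⟨hij, -⟩ | ⟨hij, hji⟩ := Sym2.eq_iff.1 (congrArg Subtype.val h)
    · exact hij
    · have htwo : (1 : Fin m) + 1 = 0 := by simpa [← hji, add_assoc] using hij
      have hval : 2 % m = 0 := by simpa [Fin.ext_iff, Fin.val_add] using htwo
      rw [Nat.mod_eq_of_lt hm] at hval
      contradiction
  · rintro ⟨e, he⟩
    induction e with
    | _ i j =>
      have hadj : (cycleG m).Adj i j := he
      obtain ⟨-, rfl | rfl⟩ := cycleG_adj.1 hadj
      · exact ⟨i, rfl⟩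
      · exact ⟨j, Subtype.ext Sym2.eq_swap⟩

/-- The incidence poset of the cycle is a crown. By rotational symmetry any prescribed vertex `v`
can be put at position `0`. -/
def crownIso (hm : 3 ≤ m) (v : Fin m) : crownRel (m := m) ≃r incidenceRel (cycleG m) where
  toEquiv := Equiv.sumCongr (Equiv.addLeft v)
    ((Equiv.addLeft v).trans (.ofBijective _ (cycleEdge_bijective hm)))
  map_rel_iff' {a b} := by
    rcases a with i | i <;> rcases b with j | j
    · exact .rfl
    · exact .rfl
    · simp [crownRel, incidenceRel, cycleEdge, add_assoc]
    · exact .rfl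

lemma card_edgeSet_cycleG (hm : 3 ≤ m) : Fintype.card (cycleG m).edgeSet = m := by
  simpa using (Fintype.card_of_bijective (cycleEdge_bijective hm)).symm

lemma card_isLinearExtension_inr_eq_last {V : Type*} {G : SimpleGraph V} {n : ℕ}
    (e : G.edgeSet) :
    Nat.card {σ : V ⊕ G.edgeSet ≃ Fin (n + 1) //
      IsLinearExtension (incidenceRel G) σ ∧ σ (.inr e) = Fin.last n} = 0 := by
  have : IsEmpty {σ : V ⊕ G.edgeSet ≃ Fin (n + 1) //
      IsLinearExtension (incidenceRel G) σ ∧ σ (.inr e) = Fin.last n} := by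
    refine ⟨fun ⟨σ, hσ, htop⟩ ↦ ?_⟩
    have hle : σ (.inr e) ≤ σ (.inl e.1.out.1) := hσ e.1.out_fst_mem
    rw [htop, Fin.last_le_iff, ← htop] at hle
    simpa using σ.injective hle
  exact Nat.card_of_isEmpty

lemma card_isLinearExtension_cycleG_inl_eq_last {k : ℕ} (hm : 3 ≤ k + 1) (v : Fin (k + 1)) :
    Nat.card {σ : Fin (k + 1) ⊕ (cycleG (k + 1)).edgeSet ≃ Fin (2 * k + 1 + 1) //
      IsLinearExtension (incidenceRel (cycleG (k + 1))) σ ∧ σ (.inl v) = Fin.last _} =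
    eulerNumber (2 * k + 1) := by
  have hv : crownIso hm v (.inl 0) = .inl v := congrArg Sum.inl (add_zero v)
  rw [← card_isLinearExtension_crownRel_inl_zero_eq_last, ← hv]
  exact card_isLinearExtension_congr (crownIso hm v) _ _

lemma card_isLinearExtension_cycleG {k : ℕ} (hm : 3 ≤ k + 1) :
    Nat.card {σ : Fin (k + 1) ⊕ (cycleG (k + 1)).edgeSet ≃ Fin (2 * k + 1 + 1) //
      IsLinearExtension (incidenceRel (cycleG (k + 1))) σ} =
    (k + 1) * eulerNumber (2 * k + 1) := by
  rw [card_isLinearExtension_eq_sum _ (Fin.last _), Fintype.sum_sum_type]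
  simp only [card_isLinearExtension_cycleG_inl_eq_last hm, card_isLinearExtension_inr_eq_last,
    Finset.sum_const, Finset.card_univ, Fintype.card_fin, smul_eq_mul, mul_zero, add_zero]

end Cycle

/-- `vol Q(C_m) = m * A_{2m-1} / (2^m * (2m)!)`. -/
theorem volume_QSet_cycle (m : ℕ) (hm : 3 ≤ m) :
    volume (QSet (cycleG m)) = ((m * eulerNumber (2 * m - 1) : ℕ) : ENNReal) /
      ((2 : ENNReal) ^ m * (Nat.factorial (2 * m) : ENNReal)) := by
  obtain ⟨k, rfl⟩ := Nat.exists_eq_add_of_le' (Nat.one_le_of_lt hm)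
  have hn : Fintype.card (Fin (k + 1)) + Fintype.card (cycleG (k + 1)).edgeSet = 2 * k + 1 + 1 := by
    rw [card_edgeSet_cycleG hm, Fintype.card_fin]
    ring
  rw [volume_QSet_s9 (cycleG (k + 1)) hn, card_isLinearExtension_cycleG hm,
    card_edgeSet_cycleG hm]
  rfl
end
end

section
/- Let m >= 3 and let A be an odd-cardinality subset of the edge set of the cycle C_m. Then (a) every point of the boolean quadric polytope P(C_m) satisfies the odd cycle inequality OC(A); and (b) the point v^0 defined by x_i = 1/2 for every vertex i, y_{ij} = 1/2 for every edge (i,j) not in A, and y_{ij} = 0 for every edge (i,j) in A, belongs to Q(C_m) but violates OC(A). -/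
open MeasureTheory Filter

noncomputable section

/-- The boolean quadric polytope `P(G)` of a graph `G`: the convex hull of the 0/1
points with `y_{ij} = x_i * x_j` for every edge `(i,j)`. -/
def BQPSet {V : Type*} (G : SimpleGraph V) : Set ((V → ℝ) × (↥G.edgeSet → ℝ)) :=
  convexHull ℝ {p | (∀ i, p.1 i = 0 ∨ p.1 i = 1) ∧
    ∀ (i j : V) (h : G.Adj i j),
      p.2 ⟨s(i, j), (SimpleGraph.mem_edgeSet _).mpr h⟩ = p.1 i * p.1 j}

/-- The odd cycle inequality `OC(A)` for the cycle graph `C_m` and a subset `A` of its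
edges: `∑_{i ∈ S₂} x_i - ∑_{i ∈ S₀} x_i + ∑_{e ∉ A} y_e - ∑_{e ∈ A} y_e ≤ ⌊|A|/2⌋`,
where `S₂` (resp. `S₀`) is the set of vertices incident to exactly two (resp. zero)
edges of `A`. -/
def OC {m : ℕ} (A : Finset (cycleG m).edgeSet)
    (p : (Fin m → ℝ) × (↥(cycleG m).edgeSet → ℝ)) : Prop :=
  (∑ i ∈ Finset.univ.filter
      (fun i : Fin m =>
        (A.filter fun e : (cycleG m).edgeSet => i ∈ (e : Sym2 (Fin m))).card = 2), p.1 i)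
  - (∑ i ∈ Finset.univ.filter
      (fun i : Fin m =>
        (A.filter fun e : (cycleG m).edgeSet => i ∈ (e : Sym2 (Fin m))).card = 0), p.1 i)
  + (∑ e ∈ Aᶜ, p.2 e) - (∑ e ∈ A, p.2 e) ≤ ((A.card / 2 : ℕ) : ℝ)

/-!
The idea is to pass to cut coordinates `z_{ij} = x_i + x_j - 2 y_{ij}`. In a `2`-regular graph each
vertex lies on `d` edges of `A` and `2 - d` others, so twice the left-hand side of `OC(A)` is
`∑_{e ∈ A} z_e - ∑_{e ∉ A} z_e`. At a 0/1 point with `y_{ij} = x_i x_j` each `z_{ij}` is `0` or `1`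
(it says whether `x` separates `i` from `j`), so the left-hand side is an integer that is at most
`|A| / 2`, hence at most `⌊|A| / 2⌋`. At `v⁰`, `z` is the indicator of `A`, so the left-hand side
equals `|A| / 2`.
-/

section GeneralGraph

open Finset

variable {V : Type*} {G : SimpleGraph V}

/-- The points whose convex hull is the boolean quadric polytope: `x` is 0/1-valued and
`y_{ij} = x_i * x_j` on every edge. -/
def booleanPoints (G : SimpleGraph V) : Set ((V → ℝ) × (G.edgeSet → ℝ)) :=
  {p | (∀ i, p.1 i = 0 ∨ p.1 i = 1) ∧
    ∀ (i j : V) (h : G.Adj i j),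
      p.2 ⟨s(i, j), (SimpleGraph.mem_edgeSet _).mpr h⟩ = p.1 i * p.1 j}

lemma snd_eq_zero_or_one_of_mem_booleanPoints {p : (V → ℝ) × (G.edgeSet → ℝ)}
    (hp : p ∈ booleanPoints G) (e : G.edgeSet) : p.2 e = 0 ∨ p.2 e = 1 := by
  obtain ⟨⟨i, j⟩, h⟩ := e
  have hy : p.2 ⟨s(i, j), h⟩ = p.1 i * p.1 j := hp.2 i j h
  rcases hp.1 i with hi | hi <;> rcases hp.1 j with hj | hj <;> simp [hy, hi, hj]

variable [DecidableEq V]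

/-- The point `v⁰` cut off by `OC(A)`: `x = 1/2`, `y = 0` on `A` and `y = 1/2` off `A`. -/
def halfPoint (A : Finset G.edgeSet) : (V → ℝ) × (G.edgeSet → ℝ) :=
  (fun _ => 1 / 2, fun e => if e ∈ A then 0 else 1 / 2)

lemma halfPoint_mem_QSet (A : Finset G.edgeSet) : halfPoint A ∈ QSet G := by
  refine ⟨fun i => ?_, fun e => ?_, fun i j h => ?_⟩
  · norm_num [halfPoint]
  · dsimp only [halfPoint]
    split_ifs <;> norm_num
  · dsimp only [halfPoint]
    split_ifs <;> norm_num

/-- The number of edges of `A` incident to the vertex `i`. -/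
def degreeIn (A : Finset G.edgeSet) (i : V) : ℕ :=
  #{e ∈ A | i ∈ e.1}

/-- The coordinate `x_i + x_j - 2 y_{ij}` at an edge `(i,j)` of the image of `(x, y)` under the
covariance map onto the cut polytope. -/
def cutCoord (p : (V → ℝ) × (G.edgeSet → ℝ)) (e : G.edgeSet) : ℝ :=
  ∑ i ∈ e.1.toFinset, p.1 i - 2 * p.2 e

lemma cutCoord_mk (p : (V → ℝ) × (G.edgeSet → ℝ)) {i j : V} (h : s(i, j) ∈ G.edgeSet) :
    cutCoord p ⟨s(i, j), h⟩ = p.1 i + p.1 j - 2 * p.2 ⟨s(i, j), h⟩ := by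
  rw [cutCoord, Sym2.toFinset_mk_eq, sum_pair (G.ne_of_adj h)]

lemma cutCoord_mem_Icc_of_mem_booleanPoints {p : (V → ℝ) × (G.edgeSet → ℝ)}
    (hp : p ∈ booleanPoints G) (e : G.edgeSet) : cutCoord p e ∈ Set.Icc 0 1 := by
  obtain ⟨⟨i, j⟩, h⟩ := e
  have hy : p.2 ⟨s(i, j), h⟩ = p.1 i * p.1 j := hp.2 i j h
  change cutCoord p ⟨s(i, j), h⟩ ∈ Set.Icc 0 1
  rw [cutCoord_mk, hy]
  rcases hp.1 i with hi | hi <;> rcases hp.1 j with hj | hj <;> norm_num [hi, hj]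

lemma cutCoord_halfPoint (A : Finset G.edgeSet) (e : G.edgeSet) :
    cutCoord (halfPoint A) e = if e ∈ A then 1 else 0 := by
  obtain ⟨⟨i, j⟩, h⟩ := e
  change cutCoord _ ⟨s(i, j), h⟩ = if ⟨s(i, j), h⟩ ∈ A then 1 else 0
  rw [cutCoord_mk]
  dsimp only [halfPoint]
  split_ifs <;> norm_num

variable [Fintype V]

lemma sum_cutCoord (A : Finset G.edgeSet) (p : (V → ℝ) × (G.edgeSet → ℝ)) :
    ∑ e ∈ A, cutCoord p e = ∑ i, degreeIn A i * p.1 i - 2 * ∑ e ∈ A, p.2 e := by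
  have double_count : ∑ e ∈ A, ∑ i ∈ e.1.toFinset, p.1 i = ∑ i, degreeIn A i * p.1 i := by
    rw [sum_comm' (t' := univ) (s' := fun i => {e ∈ A | i ∈ e.1}) (by simp [and_comm])]
    simp only [sum_const, nsmul_eq_mul, degreeIn]
  simp only [cutCoord, sum_sub_distrib, double_count, mul_sum]

variable [DecidableRel G.Adj]

lemma degreeIn_univ (i : V) : degreeIn (univ : Finset G.edgeSet) i = G.degree i := by
  rw [← G.card_incidenceFinset_eq_degree, degreeIn, ← card_map (Function.Embedding.subtype _)]
  congr 1
  ext e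
  simp [SimpleGraph.mem_incidenceFinset, SimpleGraph.incidenceSet, and_comm]

lemma degreeIn_add_degreeIn_compl (A : Finset G.edgeSet) (i : V) :
    degreeIn A i + degreeIn Aᶜ i = G.degree i := by
  rw [← degreeIn_univ, ← union_compl A, degreeIn, degreeIn, degreeIn, filter_union,
    card_union_of_disjoint (disjoint_filter_filter disjoint_compl_right)]

/-- The left-hand side of the odd cycle inequality `OC(A)`, for an arbitrary graph in place of
the cycle. -/
def oddCycleForm (A : Finset G.edgeSet) (p : (V → ℝ) × (G.edgeSet → ℝ)) : ℝ :=
  ∑ i with degreeIn A i = 2, p.1 i - ∑ i with degreeIn A i = 0, p.1 i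
    + ∑ e ∈ Aᶜ, p.2 e - ∑ e ∈ A, p.2 e

lemma isLinearMap_oddCycleForm (A : Finset G.edgeSet) : IsLinearMap ℝ (oddCycleForm A) where
  map_add p q := by
    simp only [oddCycleForm, Prod.fst_add, Prod.snd_add, Pi.add_apply, sum_add_distrib]
    ring
  map_smul c p := by
    simp only [oddCycleForm, Prod.smul_fst, Prod.smul_snd, Pi.smul_apply, smul_eq_mul, ← mul_sum]
    ring

lemma oddCycleForm_mem_addSubgroup (S : AddSubgroup ℝ) (A : Finset G.edgeSet)
    {p : (V → ℝ) × (G.edgeSet → ℝ)} (hx : ∀ i, p.1 i ∈ S) (hy : ∀ e, p.2 e ∈ S) :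
    oddCycleForm A p ∈ S :=
  S.sub_mem (S.add_mem (S.sub_mem (S.sum_mem fun i _ => hx i) (S.sum_mem fun i _ => hx i))
    (S.sum_mem fun e _ => hy e)) (S.sum_mem fun e _ => hy e)

lemma exists_int_eq_oddCycleForm_of_mem_booleanPoints (A : Finset G.edgeSet)
    {p : (V → ℝ) × (G.edgeSet → ℝ)} (hp : p ∈ booleanPoints G) :
    ∃ n : ℤ, (n : ℝ) = oddCycleForm A p := by
  have mem_int : ∀ {t : ℝ}, t = 0 ∨ t = 1 → t ∈ (Int.castAddHom ℝ).range := by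
    rintro t (rfl | rfl)
    exacts [⟨0, Int.cast_zero⟩, ⟨1, Int.cast_one⟩]
  exact oddCycleForm_mem_addSubgroup _ A (fun i => mem_int (hp.1 i))
    fun e => mem_int (snd_eq_zero_or_one_of_mem_booleanPoints hp e)

section TwoRegular

variable (hG : G.IsRegularOfDegree 2) (A : Finset G.edgeSet)
include hG

lemma two_mul_oddCycleForm (p : (V → ℝ) × (G.edgeSet → ℝ)) :
    2 * oddCycleForm A p = ∑ e ∈ A, cutCoord p e - ∑ e ∈ Aᶜ, cutCoord p e := by
  have vertex_term : ∀ i, 2 * ((if degreeIn A i = 2 then p.1 i else 0)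
      - if degreeIn A i = 0 then p.1 i else 0)
        = degreeIn A i * p.1 i - degreeIn Aᶜ i * p.1 i := by
    intro i
    have hdeg : degreeIn A i + degreeIn Aᶜ i = 2 := by
      rw [degreeIn_add_degreeIn_compl, hG i]
    obtain ⟨h, h'⟩ | ⟨h, h'⟩ | ⟨h, h'⟩ :
        degreeIn A i = 0 ∧ degreeIn Aᶜ i = 2 ∨ degreeIn A i = 1 ∧ degreeIn Aᶜ i = 1 ∨
          degreeIn A i = 2 ∧ degreeIn Aᶜ i = 0 := by omega
    all_goals norm_num [h, h']
  have vertex_sum : 2 * (∑ i with degreeIn A i = 2, p.1 i - ∑ i with degreeIn A i = 0, p.1 i)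
      = ∑ i, degreeIn A i * p.1 i - ∑ i, degreeIn Aᶜ i * p.1 i := by
    rw [sum_filter, sum_filter, ← sum_sub_distrib, ← sum_sub_distrib, mul_sum]
    exact sum_congr rfl fun i _ => vertex_term i
  rw [oddCycleForm, sum_cutCoord, sum_cutCoord]
  linear_combination vertex_sum

lemma oddCycleForm_le_of_mem_booleanPoints {p : (V → ℝ) × (G.edgeSet → ℝ)}
    (hp : p ∈ booleanPoints G) : oddCycleForm A p ≤ ((#A / 2 : ℕ) : ℝ) := by
  have hcut := cutCoord_mem_Icc_of_mem_booleanPoints hp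
  have two_mul_le : 2 * oddCycleForm A p ≤ #A :=
    calc 2 * oddCycleForm A p
        = ∑ e ∈ A, cutCoord p e - ∑ e ∈ Aᶜ, cutCoord p e := two_mul_oddCycleForm hG A p
      _ ≤ ∑ e ∈ A, cutCoord p e := sub_le_self _ (sum_nonneg fun e _ => (hcut e).1)
      _ ≤ ∑ _e ∈ A, 1 := sum_le_sum fun e _ => (hcut e).2
      _ = #A := by simp
  obtain ⟨n, hn⟩ := exists_int_eq_oddCycleForm_of_mem_booleanPoints A hp
  rw [← hn] at two_mul_le ⊢
  have two_mul_le_int : 2 * n ≤ #A := by exact_mod_cast two_mul_le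
  rw [← Int.cast_natCast, Int.cast_le]
  omega

theorem oddCycleForm_le_of_mem_BQPSet {p : (V → ℝ) × (G.edgeSet → ℝ)} (hp : p ∈ BQPSet G) :
    oddCycleForm A p ≤ ((#A / 2 : ℕ) : ℝ) :=
  convexHull_min (fun _ => oddCycleForm_le_of_mem_booleanPoints hG A)
    (convex_halfSpace_le (isLinearMap_oddCycleForm A) _) hp

lemma two_mul_oddCycleForm_halfPoint : 2 * oddCycleForm A (halfPoint A) = #A := by
  have sum_compl : ∑ e ∈ Aᶜ, cutCoord (halfPoint A) e = 0 :=
    sum_eq_zero fun e he => by rw [cutCoord_halfPoint, if_neg (mem_compl.mp he)]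
  rw [two_mul_oddCycleForm hG, sum_compl, sub_zero]
  simp [cutCoord_halfPoint]

theorem lt_oddCycleForm_halfPoint (hA : Odd #A) :
    ((#A / 2 : ℕ) : ℝ) < oddCycleForm A (halfPoint A) := by
  have hform := two_mul_oddCycleForm_halfPoint hG A
  have hfloor : (2 : ℝ) * (#A / 2 : ℕ) + 1 = #A := by
    exact_mod_cast Nat.two_mul_div_two_add_one_of_odd hA
  linarith

theorem oddCycle_valid_and_cuts_general (hA : Odd #A) :
    (∀ p ∈ BQPSet G, oddCycleForm A p ≤ ((#A / 2 : ℕ) : ℝ)) ∧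
      halfPoint A ∈ QSet G ∧ ¬ oddCycleForm A (halfPoint A) ≤ ((#A / 2 : ℕ) : ℝ) :=
  ⟨fun _ => oddCycleForm_le_of_mem_BQPSet hG A, halfPoint_mem_QSet A,
    (lt_oddCycleForm_halfPoint hG A hA).not_ge⟩

end TwoRegular

end GeneralGraph

lemma cycleG_eq_cycleGraph (m : ℕ) : cycleG m = SimpleGraph.cycleGraph m := by
  match m with
  | 0 | 1 => exact Subsingleton.elim _ _
  | n + 2 =>
    have succ_iff : ∀ i j : Fin (n + 2), ((i : ℕ) + 1) % (n + 2) = (j : ℕ) ↔ j - i = 1 := by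
      intro i j
      rw [sub_eq_iff_eq_add, Fin.ext_iff, Fin.val_add, Fin.val_one, add_comm 1, eq_comm]
    ext i j
    rw [SimpleGraph.cycleGraph_adj, cycleG, SimpleGraph.fromRel_adj, succ_iff, succ_iff, or_comm,
      and_iff_right_of_imp]
    rintro h rfl
    simp at h

lemma isRegularOfDegree_two_cycleG {m : ℕ} (hm : 3 ≤ m) : (cycleG m).IsRegularOfDegree 2 := by
  obtain ⟨n, rfl⟩ := Nat.exists_eq_add_of_le' hm
  intro i
  convert SimpleGraph.cycleGraph_degree_three_le (n := n) (v := i) using 2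
  exact cycleG_eq_cycleGraph _

/-- For an odd subset `A` of the edges of `C_m`: (a) the odd cycle inequality `OC(A)`
is valid for `P(C_m)`; (b) the point `v⁰` with all `x`-coordinates `1/2`,
`y_e = 1/2` off `A` and `y_e = 0` on `A` lies in `Q(C_m)` but violates `OC(A)`. -/
theorem oddCycle_valid_and_cuts (m : ℕ) (hm : 3 ≤ m)
    (A : Finset (cycleG m).edgeSet) (hA : Odd A.card) :
    (∀ p ∈ BQPSet (cycleG m), OC A p) ∧
    (((fun _ : Fin m => (1 / 2 : ℝ)), (fun e : (cycleG m).edgeSet =>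
        if e ∈ A then (0 : ℝ) else 1 / 2)) ∈ QSet (cycleG m) ∧
      ¬ OC A ((fun _ : Fin m => (1 / 2 : ℝ)), (fun e : (cycleG m).edgeSet =>
        if e ∈ A then (0 : ℝ) else 1 / 2))) :=
  oddCycle_valid_and_cuts_general (isRegularOfDegree_two_cycleG hm) A hA
end
end
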